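/- Let L > 0, μ < 0, and let f : E → ℝ be a differentiable function on a real inner product space E with f ∈ F_{μ,L} and f_* := inf_x f(x) > −∞. Fix an integer N ≥ 1 and a stepsize γ > 0 with γL ∈ (0,2) and γL ≠ 1, and let x_{i+1} = x_i − γ∇f(x_i) for i = 0,…,N−1. Define P_N(γL, γμ) := p(γL, γμ) · ( N − (−γL·γμ/(γL − γμ)) · Σ_{k=0}^{N} max{ (−1 + (1−γμ)^{−2k})/(γμ) − (−1 + (1−γL)^{−2k})/(γL) , 0 } ). Then (1/(2L)) · min_{0≤i≤N} ‖∇f(x_i)‖² ≤ (f(x_0) − f_*) / ( 1 + γL · min{ P_N(γL, γμ) , (−1 + (1−γL)^{−2N})/(γL) } ). -/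

import Mathlib

/-- The coefficient `p(l,u) := 2 − (−l·u)/((1−u) − |1−l|)` from the nonconvex rates. -/
noncomputable def pcoef (l u : ℝ) : ℝ := 2 - -(l * u) / ((1 - u) - |1 - l|)

/-!
Rescale `f` to `γ f`, so that the steps have unit length, and put `s = 1 - γL`, `t = 1 - γμ`.
The interpolation inequalities of `F_{μ,L}` bound each decrease `f(x_k) - f(x_{k+1})` from below by
`‖∇f(x_k)‖²` and the defect `∇f(x_{k+1}) - s ∇f(x_k)`. For short steps (`s > 0`) the norm of the
defect is bounded below by the two gradient norms. For long steps (`s < 0`) cocoercivity bounds it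
below by a multiple of `‖∇f(x_{k+1})‖² - s² ‖∇f(x_k)‖²`, and the resulting differences of squared
norms telescope. This gives the sublinear rate `p` per step. While the gap between the two sums
`∑ t⁻ʲ` and `∑ s⁻ʲ` is nonnegative, an energy with these weights does better and gives the linear
rate; the first negative gap is where the sublinear rate takes over. The `1` in the denominator is
one last gradient step of length `1 / L` from `x_N`.
-/

open scoped InnerProductSpace
open Finset

section FirstOrder

lemma add_fderiv_sub_le_of_convexOn {E : Type*} [NormedAddCommGroup E] [NormedSpace ℝ E]
    {S : Set E} {φ : E → ℝ} {φ' : E →L[ℝ] ℝ} {x y : E} (hφ : ConvexOn ℝ S φ) (hx : x ∈ S)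
    (hy : y ∈ S) (hφ' : HasFDerivAt φ φ' x) : φ x + φ' (y - x) ≤ φ y := by
  have hline : HasDerivAt (φ ∘ AffineMap.lineMap x y) (φ' (y - x)) (0 : ℝ) :=
    HasFDerivAt.comp_hasDerivAt 0 (by simpa using hφ') AffineMap.hasDerivAt_lineMap
  have hslope := (hφ.comp_affineMap (AffineMap.lineMap x y)).le_slope_of_hasDerivAt
    (x := (0 : ℝ)) (y := 1) (by simpa) (by simpa) one_pos hline
  simp only [slope_def_field, Function.comp_apply, AffineMap.lineMap_apply_one,
    AffineMap.lineMap_apply_zero, sub_zero, div_one] at hslope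
  linarith

variable {E : Type*} [NormedAddCommGroup E] [InnerProductSpace ℝ E]

lemma quadratic_le_of_convexOn {f : E → ℝ} {a : ℝ} {g y : E}
    (hconv : ConvexOn ℝ Set.univ fun z => f z - a / 2 * ‖z‖ ^ 2)
    (hg : HasFDerivAt f (innerSL ℝ g) y) (z : E) :
    f y + ⟪g, z - y⟫_ℝ + a / 2 * ‖z - y‖ ^ 2 ≤ f z := by
  have hsq := ((hasStrictFDerivAt_norm_sq y).hasFDerivAt (𝕜 := ℝ)).const_mul (a / 2)
  have htangent := add_fderiv_sub_le_of_convexOn hconv (Set.mem_univ y) (Set.mem_univ z)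
    (hg.sub hsq)
  simp only [sub_apply, smul_apply, innerSL_apply_apply,
    inner_sub_right, real_inner_self_eq_norm_sq, smul_eq_mul, nsmul_eq_mul] at htangent
  rw [norm_sub_sq_real, inner_sub_right, real_inner_comm y z]
  push_cast at htangent
  linarith

/-- The class `F_{μ,L}` in first-order form: `f`, with gradient `G`, lies between the quadratics of
curvature `μ` and `L` tangent to it at any point. -/
structure HasCurvatureBounds (f : E → ℝ) (G : E → E) (μ L : ℝ) : Prop where
  lower : ∀ y z, f y + ⟪G y, z - y⟫_ℝ + μ / 2 * ‖z - y‖ ^ 2 ≤ f z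
  upper : ∀ y z, f z ≤ f y + ⟪G y, z - y⟫_ℝ + L / 2 * ‖z - y‖ ^ 2

namespace HasCurvatureBounds

variable {f : E → ℝ} {G : E → E} {μ L : ℝ}

lemma of_convexOn (hG : ∀ z, HasFDerivAt f (innerSL ℝ (G z)) z)
    (hsmooth : ConvexOn ℝ Set.univ fun z => L / 2 * ‖z‖ ^ 2 - f z)
    (hcurv : ConvexOn ℝ Set.univ fun z => f z - μ / 2 * ‖z‖ ^ 2) :
    HasCurvatureBounds f G μ L where
  lower y := quadratic_le_of_convexOn hcurv (hG y)
  upper y z := by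
    have hconv : ConvexOn ℝ Set.univ fun z => -f z - -L / 2 * ‖z‖ ^ 2 := by
      convert hsmooth using 2 with z
      ring
    have hneg : HasFDerivAt (fun z => -f z) (innerSL ℝ (-G y)) y := by
      simpa only [map_neg] using (hG y).fun_neg
    have hmodel := quadratic_le_of_convexOn hconv hneg z
    rw [inner_neg_left] at hmodel
    linarith

lemma const_mul (h : HasCurvatureBounds f G μ L) {c : ℝ} (hc : 0 ≤ c) :
    HasCurvatureBounds (fun z => c * f z) (fun z => c • G z) (c * μ) (c * L) where
  lower y z := by
    rw [real_inner_smul_left]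
    linear_combination c * h.lower y z
  upper y z := by
    rw [real_inner_smul_left]
    linear_combination c * h.upper y z

theorem interpolation (h : HasCurvatureBounds f G μ L) (hμL : μ < L) (y z : E) :
    ⟪G y, y - z⟫_ℝ - L / 2 * ‖y - z‖ ^ 2
      + ‖L • (y - z) - (G y - G z)‖ ^ 2 / (L - μ) / 2 ≤ f y - f z := by
  have hc : (L - μ)⁻¹ * (L - μ) = 1 := inv_mul_cancel₀ (sub_pos.2 hμL).ne'
  obtain ⟨p, hp⟩ : ∃ p, p = y - z := ⟨_, rfl⟩
  obtain ⟨v, hv⟩ : ∃ v, v = L • p - (G y - G z) := ⟨_, rfl⟩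
  -- This point maximises the gap between the lower model at `z` and the upper model at `y`.
  obtain ⟨w, hw⟩ : ∃ w, w = z + (L - μ)⁻¹ • v := ⟨_, rfl⟩
  have hmodels := (h.lower z w).trans (h.upper y w)
  have hwz : w - z = (L - μ)⁻¹ • v := by rw [hw, add_sub_cancel_left]
  have hwy : w - y = (L - μ)⁻¹ • v - p := by rw [← hwz, hp, sub_sub_sub_cancel_right]
  have hGz : G z = G y + v - L • p := by rw [hv]; abel
  rw [← hp, ← hv]
  rw [hwz, hwy, hGz] at hmodels
  simp only [norm_sub_sq_real, inner_add_left, inner_sub_left, inner_sub_right,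
    real_inner_smul_left, real_inner_smul_right, norm_smul, mul_pow, Real.norm_eq_abs, sq_abs,
    real_inner_self_eq_norm_sq, real_inner_comm v p] at hmodels
  rw [div_eq_mul_inv _ (L - μ)]
  linear_combination hmodels + (L - μ)⁻¹ / 2 * ‖v‖ ^ 2 * hc

theorem cocoercive (h : HasCurvatureBounds f G μ L) (hμL : μ < L) (y z : E) :
    ‖L • (y - z) - (G y - G z)‖ ^ 2 / (L - μ) ≤ ⟪y - z, L • (y - z) - (G y - G z)⟫_ℝ := by
  have hyz := h.interpolation hμL y z
  have hzy := h.interpolation hμL z y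
  have hdefect : L • (z - y) - (G z - G y) = -(L • (y - z) - (G y - G z)) := by
    rw [← neg_sub y z, smul_neg]
    abel
  rw [hdefect, norm_neg, ← neg_sub y z, norm_neg, inner_neg_right] at hzy
  rw [inner_sub_right, inner_sub_right, real_inner_smul_right, real_inner_self_eq_norm_sq,
    real_inner_comm (G y), real_inner_comm (G z)]
  linear_combination hyz + hzy

lemma norm_sq_le_sub (h : HasCurvatureBounds f G μ L) (hL : 0 < L) {fmin : ℝ}
    (hmin : ∀ z, fmin ≤ f z) (y : E) : ‖G y‖ ^ 2 / (2 * L) ≤ f y - fmin := by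
  have hupper := h.upper y (y - L⁻¹ • G y)
  rw [sub_sub_cancel_left, inner_neg_right, norm_neg, norm_smul, mul_pow, Real.norm_eq_abs,
    sq_abs, real_inner_smul_right, real_inner_self_eq_norm_sq] at hupper
  calc ‖G y‖ ^ 2 / (2 * L) = L⁻¹ * ‖G y‖ ^ 2 - L / 2 * (L⁻¹ ^ 2 * ‖G y‖ ^ 2) := by
        field_simp
        ring
    _ ≤ f y - fmin := by linarith [hmin (y - L⁻¹ • G y)]

end HasCurvatureBounds

end FirstOrder

section InvPowSum

/-- The sum `s⁻¹ + ⋯ + s⁻²ᵏ`. At `s = 1 - γL` it is the rate constant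
`(-1 + (1 - γL)^{-2k}) / (γL)` of the theorem; at `s = 0` it is the junk value `0`. -/
noncomputable def invPowSum (s : ℝ) (k : ℕ) : ℝ := ∑ j ∈ range (2 * k), s⁻¹ ^ (j + 1)

/-- The divided difference of `invPowSum · k` between `s = 1 - γL` and `t = 1 - γμ`. While it stays
nonnegative, the rate constant of curvature `L` is the smaller one. -/
noncomputable def invPowGap (s t : ℝ) (k : ℕ) : ℝ := (invPowSum t k - invPowSum s k) / (t - s)

variable {s t : ℝ}

@[simp] lemma invPowSum_zero (s : ℝ) : invPowSum s 0 = 0 := by simp [invPowSum]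

@[simp] lemma invPowGap_zero (s t : ℝ) : invPowGap s t 0 = 0 := by simp [invPowGap]

lemma sq_mul_invPowSum_succ (hs : s ≠ 0) (k : ℕ) :
    s ^ 2 * invPowSum s (k + 1) = invPowSum s k + 1 + s := by
  have hterm (j : ℕ) : s ^ 2 * s⁻¹ ^ (j + 3) = s⁻¹ ^ (j + 1) := by
    rw [pow_add s⁻¹ (j + 1) 2, mul_left_comm, ← mul_pow, mul_inv_cancel₀ hs, one_pow, mul_one]
  rw [invPowSum, mul_add_one, sum_range_succ', sum_range_succ', mul_add, mul_add, mul_sum]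
  simp only [add_assoc, Nat.reduceAdd, hterm]
  rw [invPowSum]
  field_simp

lemma one_sub_mul_invPowSum (hs : s ≠ 0) (k : ℕ) :
    (1 - s) * invPowSum s k = -1 + s ^ (-(2 * (k : ℤ))) := by
  induction k with
  | zero => simp
  | succ k ih =>
    have hzpow : s ^ 2 * s ^ (-(2 * ((k + 1 : ℕ) : ℤ))) = s ^ (-(2 * (k : ℤ))) := by
      rw [← zpow_natCast s 2, ← zpow_add₀ hs]
      push_cast
      ring_nf
    refine mul_left_cancel₀ (pow_ne_zero 2 hs) ?_
    linear_combination (1 - s) * sq_mul_invPowSum_succ hs k + ih - hzpow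

lemma invPowSum_eq_div (hs : s ≠ 0) (hs1 : s ≠ 1) (k : ℕ) :
    invPowSum s k = (-1 + s ^ (-(2 * (k : ℤ)))) / (1 - s) :=
  eq_div_of_mul_eq (sub_ne_zero.2 hs1.symm) (by rw [mul_comm, one_sub_mul_invPowSum hs])

lemma invPowSum_nonneg (hs : -1 ≤ s) (k : ℕ) : 0 ≤ invPowSum s k := by
  obtain rfl | hs0 := eq_or_ne s 0
  · simp [invPowSum]
  induction k with
  | zero => simp
  | succ k ih =>
    rw [← mul_nonneg_iff_of_pos_left (c := s ^ 2) (by positivity), sq_mul_invPowSum_succ hs0]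
    linarith

lemma invPowSum_le_invPowSum (hs : 0 < s) (hst : s ≤ t) (k : ℕ) :
    invPowSum t k ≤ invPowSum s k := by
  have ht : 0 < t := hs.trans_le hst
  unfold invPowSum
  gcongr

lemma mul_le_sq_mul_invPowSum (hs : s ≠ 0) (hs_lower : -1 ≤ s) (hs_upper : s ≤ 1) (k : ℕ) :
    k * (1 + s) ≤ s ^ 2 * invPowSum s k := by
  induction k with
  | zero => simp
  | succ k ih =>
    have hle : s ^ 2 * invPowSum s k ≤ invPowSum s k :=
      mul_le_of_le_one_left (invPowSum_nonneg hs_lower k) (sq_le_one_iff_abs_le_one s |>.2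
        (abs_le.2 ⟨hs_lower, hs_upper⟩))
    rw [sq_mul_invPowSum_succ hs]
    push_cast
    linarith

lemma sq_mul_invPowSum_le_mul (ht : 1 ≤ t) (k : ℕ) :
    t ^ 2 * invPowSum t k ≤ k * (1 + t) := by
  induction k with
  | zero => simp
  | succ k ih =>
    have hle : invPowSum t k ≤ t ^ 2 * invPowSum t k :=
      le_mul_of_one_le_left (invPowSum_nonneg (by linarith) k) (one_le_pow₀ ht)
    rw [sq_mul_invPowSum_succ (by positivity)]
    push_cast
    linarith

lemma mul_invPowSum_le_sq_sub_mul_invPowSum (hs : -1 ≤ s) (hs0 : s < 0) (ht : 1 ≤ t) (k : ℕ) :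
    (1 + s) * t * invPowSum t k ≤ (t - s) ^ 2 * invPowSum s k := by
  have hS := mul_le_sq_mul_invPowSum hs0.ne hs (by linarith) k
  have hT := sq_mul_invPowSum_le_mul ht k
  have hcoeff : s ^ 2 * (1 + t) ≤ t * (t - s) ^ 2 := by
    nlinarith [mul_nonneg (sq_nonneg t) (neg_pos.2 hs0).le, one_le_pow₀ ht (n := 3)]
  have hs1 : 0 ≤ 1 + s := by linarith
  refine le_of_mul_le_mul_left (a := s ^ 2 * t) ?_ (mul_pos (sq_pos_of_neg hs0) (by linarith))
  calc s ^ 2 * t * ((1 + s) * t * invPowSum t k)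
      = s ^ 2 * (1 + s) * (t ^ 2 * invPowSum t k) := by ring
    _ ≤ s ^ 2 * (1 + s) * (k * (1 + t)) := by gcongr
    _ = s ^ 2 * (1 + t) * (k * (1 + s)) := by ring
    _ ≤ t * (t - s) ^ 2 * (s ^ 2 * invPowSum s k) := by
      gcongr
    _ = s ^ 2 * t * ((t - s) ^ 2 * invPowSum s k) := by ring

lemma sq_mul_invPowGap_succ (hs : s ≠ 0) (ht : t ≠ 0) (hst : s ≠ t) (k : ℕ) :
    t ^ 2 * invPowGap s t (k + 1) = 1 + invPowGap s t k - (s + t) * invPowSum s (k + 1) := by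
  have hts : t - s ≠ 0 := sub_ne_zero.2 hst.symm
  unfold invPowGap
  field_simp
  linear_combination sq_mul_invPowSum_succ ht k - sq_mul_invPowSum_succ hs k

lemma mul_invPowGap_le_invPowSum (hs : -1 ≤ s) (hs0 : s < 0) (ht : 1 ≤ t) (k : ℕ) :
    (1 + s) * t / (t - s) * invPowGap s t k ≤ invPowSum s k := by
  have hts : 0 < t - s := by linarith
  have hS : 0 ≤ (1 + s) * t * invPowSum s k :=
    mul_nonneg (mul_nonneg (by linarith) (by linarith)) (invPowSum_nonneg hs k)
  rw [invPowGap, div_mul_div_comm, div_le_iff₀ (by positivity)]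
  linarith [mul_invPowSum_le_sq_sub_mul_invPowSum hs hs0 ht k]

lemma mul_invPowGap_le_one (hs : s ≠ 0) (hs1 : s ≤ 1) (ht : 1 < t) (k : ℕ) :
    (1 - s) * (t - 1) * invPowGap s t k ≤ 1 := by
  have hS := one_sub_mul_invPowSum hs k
  have hT := one_sub_mul_invPowSum (zero_lt_one.trans ht).ne' k
  have hs_zpow : 0 ≤ s ^ (-(2 * (k : ℤ))) := (even_two_mul _).neg.zpow_nonneg s
  have ht_zpow : 0 ≤ t ^ (-(2 * (k : ℤ))) := (even_two_mul _).neg.zpow_nonneg t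
  rw [invPowGap, mul_div_assoc', div_le_one (by linarith)]
  calc (1 - s) * (t - 1) * (invPowSum t k - invPowSum s k)
      = (1 - s) * (1 - t ^ (-(2 * (k : ℤ)))) + (t - 1) * (1 - s ^ (-(2 * (k : ℤ)))) := by
        linear_combination -(1 - s) * hT - (t - 1) * hS
    _ ≤ (1 - s) * 1 + (t - 1) * 1 := by gcongr <;> linarith
    _ = t - s := by ring

end InvPowSum

section Rates

variable {s t : ℝ} {N : ℕ}

/-- The sublinear rate `P_N` of the theorem at `s = 1 - γL` and `t = 1 - γμ`. -/
noncomputable def sublinearRate (s t : ℝ) (N : ℕ) : ℝ :=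
  pcoef (1 - s) (1 - t) *
    (N - (1 - s) * (t - 1) * ∑ k ∈ range (N + 1), max (invPowGap s t k) 0)

lemma sublinearRate_eq (hs0 : s ≠ 0) (hs1 : s ≠ 1) (ht : 1 < t) (hst : s < t) :
    sublinearRate s t N = pcoef (1 - s) (1 - t) *
      (N - -(1 - s) * (1 - t) / ((1 - s) - (1 - t)) *
        ∑ k ∈ range (N + 1), max ((-1 + t ^ (-(2 * (k : ℤ)))) / (1 - t) -
          (-1 + s ^ (-(2 * (k : ℤ)))) / (1 - s)) 0) := by
  have hmax (k : ℕ) : max (invPowGap s t k) 0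
      = max (invPowSum t k - invPowSum s k) 0 / (t - s) := by
    rw [invPowGap, ← max_div_div_right (sub_pos.2 hst).le, zero_div]
  simp only [sublinearRate, hmax, ← sum_div, ← invPowSum_eq_div hs0 hs1,
    ← invPowSum_eq_div (zero_lt_one.trans ht).ne' ht.ne']
  ring

lemma pcoef_one_sub_of_nonpos (hs : s ≤ 0) (hst : s + t ≠ 0) :
    pcoef (1 - s) (1 - t) = (1 + s) * (1 + t) / (s + t) := by
  rw [pcoef, sub_sub_cancel, sub_sub_cancel, abs_of_nonpos hs, sub_neg_eq_add, add_comm t]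
  field_simp
  ring

lemma pcoef_one_sub_of_nonneg (hs : 0 ≤ s) (hst : s ≠ t) :
    pcoef (1 - s) (1 - t) = 1 + s + (1 - s) ^ 2 / (t - s) := by
  have hts : t - s ≠ 0 := sub_ne_zero.2 hst.symm
  rw [pcoef, sub_sub_cancel, sub_sub_cancel, abs_of_nonneg hs]
  field_simp
  ring

lemma pcoef_one_sub_nonneg (hs : |s| ≤ 1) (ht : 1 < t) : 0 ≤ pcoef (1 - s) (1 - t) := by
  have hden : 0 < t - |s| := by linarith
  rw [pcoef, sub_sub_cancel, sub_sub_cancel, sub_nonneg, div_le_iff₀ hden]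
  nlinarith [le_abs_self s, neg_abs_le s]

lemma sublinearRate_nonneg (hs : |s| ≤ 1) (hs0 : s ≠ 0) (ht : 1 < t) (N : ℕ) :
    0 ≤ sublinearRate s t N := by
  refine mul_nonneg (pcoef_one_sub_nonneg hs ht) (sub_nonneg.2 ?_)
  rw [sum_range_succ', invPowGap_zero, max_self, add_zero, mul_sum]
  calc ∑ k ∈ range N, (1 - s) * (t - 1) * max (invPowGap s t (k + 1)) 0
      ≤ ∑ _k ∈ range N, (1 : ℝ) := by
        refine sum_le_sum fun k _ => ?_
        obtain hmax | hmax := max_choice (invPowGap s t (k + 1)) 0 <;> rw [hmax]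
        · exact mul_invPowGap_le_one hs0 (le_of_abs_le hs) ht (k + 1)
        · simp
    _ = N := by simp

lemma sublinearRate_of_pos (hs : 0 < s) (hst : s < t) :
    sublinearRate s t N = (1 + s + (1 - s) ^ 2 / (t - s)) * N := by
  have hmax (k : ℕ) : max (invPowGap s t k) 0 = 0 := max_eq_right <|
    div_nonpos_of_nonpos_of_nonneg (sub_nonpos.2 (invPowSum_le_invPowSum hs hst.le k))
      (sub_pos.2 hst).le
  rw [sublinearRate, sum_eq_zero fun k _ => hmax k, mul_zero, sub_zero,
    pcoef_one_sub_of_nonneg hs.le hst.ne]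

lemma mul_sub_sum_invPowGap (hs : s ≠ 0) (ht : t ≠ 0) (hst : s ≠ t) (hadd : s + t ≠ 0) (K : ℕ) :
    (1 + s) * (1 + t) / (s + t) *
        (K - (1 - s) * (t - 1) * ∑ k ∈ range (K + 1), invPowGap s t k)
      = invPowSum s K + (1 - s ^ 2) / (s + t) * invPowGap s t K := by
  induction K with
  | zero => simp
  | succ K ih =>
    have hS := sq_mul_invPowSum_succ hs K
    have hR := sq_mul_invPowGap_succ hs ht hst K
    rw [sum_range_succ]
    push_cast
    field_simp at ih ⊢
    linear_combination ih - (s + t) * hS - (1 - s ^ 2) * hR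

lemma sublinearRate_le (hs : -1 ≤ s) (hs0 : s < 0) (ht : 1 < t) {k : ℕ} (hk : k ≤ N) :
    sublinearRate s t N ≤ invPowSum s k + (1 - s ^ 2) / (s + t) * invPowGap s t k
      + (1 + s) * (1 + t) / (s + t) * (N - k) := by
  have hst : 0 < s + t := by linarith
  have hone_add : 0 ≤ 1 + s := by linarith
  have hcoeff : 0 ≤ (1 - s) * (t - 1) := mul_nonneg (by linarith) (by linarith)
  have hsum : ∑ i ∈ range (k + 1), invPowGap s t i
      ≤ ∑ i ∈ range (N + 1), max (invPowGap s t i) 0 :=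
    calc ∑ i ∈ range (k + 1), invPowGap s t i
        ≤ ∑ i ∈ range (k + 1), max (invPowGap s t i) 0 := sum_le_sum fun _ _ => le_max_left _ _
      _ ≤ ∑ i ∈ range (N + 1), max (invPowGap s t i) 0 :=
        sum_le_sum_of_subset_of_nonneg (range_mono (by omega)) fun _ _ _ => le_max_right _ _
  rw [sublinearRate, pcoef_one_sub_of_nonpos hs0.le hst.ne',
    ← mul_sub_sum_invPowGap hs0.ne (by positivity) (by linarith) hst.ne', ← mul_add]
  gcongr
  linarith [mul_le_mul_of_nonneg_left hsum hcoeff]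

lemma exists_nonneg_and_succ_neg {r : ℕ → ℝ} (h0 : 0 ≤ r 0) (h : ¬∀ j ≤ N, 0 ≤ r j) :
    ∃ k < N, (∀ j ≤ k, 0 ≤ r j) ∧ r (k + 1) < 0 := by
  obtain ⟨k, hk, hk_succ⟩ := Nat.exists_not_and_succ_of_not_zero_of_exists
    (p := fun n => ¬∀ j ≤ n, 0 ≤ r j) (by simpa) ⟨N, h⟩
  rw [not_not] at hk
  refine ⟨k, lt_of_not_ge fun hNk => h fun j hj => hk j (hj.trans hNk), hk, ?_⟩
  by_contra! hnonneg
  exact hk_succ fun j hj => (Nat.le_succ_iff.1 hj).elim (hk j) fun hj' => hj' ▸ hnonneg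

end Rates

section Descent

variable {E : Type*} [NormedAddCommGroup E] [InnerProductSpace ℝ E]

/-- The deviation of consecutive gradients from `g (k + 1) = s • g k`, which a unit step of gradient
descent on a quadratic of curvature `1 - s` satisfies exactly. -/
def stepDefect (s : ℝ) (g : ℕ → E) (k : ℕ) : E := g (k + 1) - s • g k

/-- What the interpolation inequalities of `F_{1-t,1-s}` say about the values `F` and the gradients
`g` along `N` unit steps of gradient descent: the decrease over one step, and cocoercivity between
iterates at distance one and two. -/
structure DescentInequalities (N : ℕ) (F : ℕ → ℝ) (g : ℕ → E) (s t : ℝ) : Prop where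
  decrease : ∀ k < N,
    (1 + s) / 2 * ‖g k‖ ^ 2 + ‖stepDefect s g k‖ ^ 2 / (t - s) / 2 ≤ F k - F (k + 1)
  cocoercive : ∀ k < N, ‖stepDefect s g k‖ ^ 2 / (t - s) ≤ ⟪g k, stepDefect s g k⟫_ℝ
  cocoercive_two : ∀ k, k + 1 < N →
    ‖stepDefect s g k + stepDefect s g (k + 1)‖ ^ 2 / (t - s)
      ≤ ⟪g k + g (k + 1), stepDefect s g k + stepDefect s g (k + 1)⟫_ℝ

theorem HasCurvatureBounds.descentInequalities {f : E → ℝ} {G : E → E} {x : ℕ → E} {N : ℕ}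
    {s t : ℝ} (h : HasCurvatureBounds f G (1 - t) (1 - s)) (hst : s < t)
    (hx : ∀ k < N, x (k + 1) = x k - G (x k)) :
    DescentInequalities N (fun k => f (x k)) (fun k => G (x k)) s t := by
  have hlt : 1 - t < 1 - s := by linarith
  have hwidth : 1 - s - (1 - t) = t - s := by ring
  have hstep : ∀ k < N, x k - x (k + 1) = G (x k) := fun k hk => by rw [hx k hk, sub_sub_cancel]
  have hdefect : ∀ k < N, (1 - s) • (x k - x (k + 1)) - (G (x k) - G (x (k + 1)))
      = stepDefect s (fun i => G (x i)) k := fun k hk => by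
    rw [hstep k hk, stepDefect, sub_smul, one_smul]
    abel
  refine ⟨fun k hk => ?_, fun k hk => ?_, fun k hk => ?_⟩
  · have hinterp := h.interpolation hlt (x k) (x (k + 1))
    rw [hdefect k hk, hstep k hk, real_inner_self_eq_norm_sq, hwidth] at hinterp
    linarith
  · have hcoco := h.cocoercive hlt (x k) (x (k + 1))
    rwa [hdefect k hk, hstep k hk, hwidth] at hcoco
  · have hcoco := h.cocoercive hlt (x k) (x (k + 2))
    have hdefect_two : (1 - s) • (x k - x (k + 2)) - (G (x k) - G (x (k + 2)))
        = stepDefect s (fun i => G (x i)) k + stepDefect s (fun i => G (x i)) (k + 1) := by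
      rw [← hdefect k (by omega), ← hdefect (k + 1) hk, smul_sub, smul_sub, smul_sub]
      abel
    rwa [hdefect_two, ← sub_add_sub_cancel _ (x (k + 1)), hstep k (by omega),
      hstep (k + 1) hk, hwidth] at hcoco

/-- The Lyapunov function of the long-step analysis: it bounds the total decrease from below as long
as the gaps `invPowGap s t` stay nonnegative. -/
noncomputable def descentEnergy (s t : ℝ) (g : ℕ → E) (k : ℕ) : ℝ :=
  invPowSum s k / 2 * ‖g k‖ ^ 2 + invPowGap s t k / 2 * (‖stepDefect s g k‖ ^ 2 / (t - s))

/-- The multipliers come from the dual of the performance estimation problem: with `a`, `b` the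
gradients at two consecutive iterates and `d`, `d'` the next two defects, the loss of energy is a
combination of three cocoercivity slacks and a square. -/
lemma energy_certificate {s t : ℝ} (hst : s ≠ t) (e r : ℝ) {a b d : E} (d' : E)
    (hb : b = s • a + d) :
    s ^ 2 * e / 2 * ‖a‖ ^ 2 + ((s + t) * e + t ^ 2 * r) / 2 * (‖d‖ ^ 2 / (t - s))
        - (e / 2 * ‖b‖ ^ 2 + r / 2 * (‖d'‖ ^ 2 / (t - s)))
      = -s * (e - (1 + s) * t / (t - s) * r) * (⟪a, d⟫_ℝ - ‖d‖ ^ 2 / (t - s))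
        + -s * t * (r / (t - s)) * (⟪a + b, d + d'⟫_ℝ - ‖d + d'‖ ^ 2 / (t - s))
        + (1 + s) * t * (r / (t - s)) * (⟪b, d'⟫_ℝ - ‖d'‖ ^ 2 / (t - s))
        + (s + t) * r / 2 * (‖t • d - d'‖ ^ 2 / (t - s) ^ 2) := by
  have hts : t - s ≠ 0 := sub_ne_zero.2 hst.symm
  subst hb
  simp only [norm_sub_sq_real, norm_add_sq_real, inner_add_left, inner_add_right,
    real_inner_smul_left, norm_smul, mul_pow, Real.norm_eq_abs, sq_abs,
    real_inner_self_eq_norm_sq]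
  field_simp
  ring

namespace DescentInequalities

variable {N : ℕ} {F : ℕ → ℝ} {g : ℕ → E} {s t m : ℝ} {k : ℕ}

lemma norm_sq_succ_le (H : DescentInequalities N F g s t) (hs : s ≤ 0) (hst : s < t) (hk : k < N) :
    ‖g (k + 1)‖ ^ 2
      ≤ s ^ 2 * ‖g k‖ ^ 2 + (s + t) * (‖stepDefect s g k‖ ^ 2 / (t - s)) := by
  have hts : (t - s)⁻¹ * (t - s) = 1 := inv_mul_cancel₀ (sub_pos.2 hst).ne'
  have hg : g (k + 1) = s • g k + stepDefect s g k := by rw [stepDefect, add_sub_cancel]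
  have hcoco := mul_le_mul_of_nonneg_left (H.cocoercive k hk) (neg_nonneg.2 hs)
  rw [hg, norm_add_sq_real, real_inner_smul_left, norm_smul, mul_pow, Real.norm_eq_abs, sq_abs]
  linear_combination 2 * hcoco - ‖stepDefect s g k‖ ^ 2 * hts

lemma sq_mul_invPowSum_add_le (H : DescentInequalities N F g s t) (hs : s ≠ 0) (hk : k < N) :
    s ^ 2 * invPowSum s (k + 1) / 2 * ‖g k‖ ^ 2
      + (1 + invPowGap s t k) / 2 * (‖stepDefect s g k‖ ^ 2 / (t - s))
      ≤ descentEnergy s t g k + (F k - F (k + 1)) := by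
  rw [descentEnergy, sq_mul_invPowSum_succ hs]
  linear_combination H.decrease k hk

lemma descentEnergy_succ_le (H : DescentInequalities N F g s t) (hs : -1 ≤ s) (hs0 : s < 0)
    (ht : 1 ≤ t) (hgap : 0 ≤ invPowGap s t (k + 1)) (hk : k + 1 < N) :
    descentEnergy s t g (k + 1) ≤ descentEnergy s t g k + (F k - F (k + 1)) := by
  have hg : g (k + 1) = s • g k + stepDefect s g k := by rw [stepDefect, add_sub_cancel]
  have hcertificate := energy_certificate (by linarith : s ≠ t) (invPowSum s (k + 1))
    (invPowGap s t (k + 1)) (stepDefect s g (k + 1)) hg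
  have hnonneg : 0 ≤ s ^ 2 * invPowSum s (k + 1) / 2 * ‖g k‖ ^ 2
      + ((s + t) * invPowSum s (k + 1) + t ^ 2 * invPowGap s t (k + 1)) / 2
        * (‖stepDefect s g k‖ ^ 2 / (t - s))
      - descentEnergy s t g (k + 1) := by
    have hmultiplier := sub_nonneg.2 (mul_invPowGap_le_invPowSum hs hs0 ht (k + 1))
    have hslack := sub_nonneg.2 (H.cocoercive k (by omega))
    have hslack_succ := sub_nonneg.2 (H.cocoercive (k + 1) hk)
    have hslack_two := sub_nonneg.2 (H.cocoercive_two k hk)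
    have hneg : 0 ≤ -s := by linarith
    have hone_add : 0 ≤ 1 + s := by linarith
    have hadd : 0 ≤ s + t := by linarith
    have hsub : 0 ≤ t - s := by linarith
    rw [descentEnergy, hcertificate]
    positivity
  rw [sq_mul_invPowGap_succ hs0.ne (by positivity) (by linarith), add_sub_cancel] at hnonneg
  linarith [H.sq_mul_invPowSum_add_le (t := t) hs0.ne (by omega : k < N)]

lemma descentEnergy_le (H : DescentInequalities N F g s t) (hs : -1 ≤ s) (hs0 : s < 0)
    (ht : 1 ≤ t) (hk : k < N) (hgap : ∀ j ≤ k, 0 ≤ invPowGap s t j) :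
    descentEnergy s t g k ≤ F 0 - F k := by
  induction k with
  | zero => simp [descentEnergy]
  | succ k ih =>
    have hstep := H.descentEnergy_succ_le hs hs0 ht (hgap (k + 1) le_rfl) hk
    linarith [ih (by omega) fun j hj => hgap j (by omega)]

lemma linear_rate (H : DescentInequalities N F g s t) (hs : -1 ≤ s) (hs0 : s < 0)
    (ht : 1 ≤ t) (hgap : ∀ j ≤ N, 0 ≤ invPowGap s t j) :
    invPowSum s N / 2 * ‖g N‖ ^ 2 ≤ F 0 - F N := by
  obtain _ | k := N
  · simp
  have henergy := H.descentEnergy_le hs hs0 ht k.lt_succ_self fun j hj => hgap j (by omega)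
  have hdecrease := H.sq_mul_invPowSum_add_le (t := t) hs0.ne k.lt_succ_self
  have hweight : (s + t) * invPowSum s (k + 1) ≤ 1 + invPowGap s t k := by
    have hsucc := sq_mul_invPowGap_succ (t := t) hs0.ne (by positivity) (by linarith) k
    linarith [mul_nonneg (sq_nonneg t) (hgap (k + 1) le_rfl)]
  have hts : 0 ≤ t - s := by linarith
  calc invPowSum s (k + 1) / 2 * ‖g (k + 1)‖ ^ 2
      ≤ invPowSum s (k + 1) / 2
          * (s ^ 2 * ‖g k‖ ^ 2 + (s + t) * (‖stepDefect s g k‖ ^ 2 / (t - s))) := by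
        gcongr
        · linarith [invPowSum_nonneg hs (k + 1)]
        · exact H.norm_sq_succ_le hs0.le (by linarith) k.lt_succ_self
    _ = s ^ 2 * invPowSum s (k + 1) / 2 * ‖g k‖ ^ 2
          + (s + t) * invPowSum s (k + 1) / 2 * (‖stepDefect s g k‖ ^ 2 / (t - s)) := by ring
    _ ≤ s ^ 2 * invPowSum s (k + 1) / 2 * ‖g k‖ ^ 2
          + (1 + invPowGap s t k) / 2 * (‖stepDefect s g k‖ ^ 2 / (t - s)) := by gcongr
    _ ≤ F 0 - F (k + 1) := by linarith

lemma sublinear_decrease (H : DescentInequalities N F g s t) (hs : s ≤ 0) (hst : 0 < s + t)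
    (hk : k < N) :
    (1 + s) * (1 + t) / (s + t) / 2 * ‖g k‖ ^ 2 + (‖g (k + 1)‖ ^ 2 - ‖g k‖ ^ 2) / (s + t) / 2
      ≤ F k - F (k + 1) := by
  have hdefect : (‖g (k + 1)‖ ^ 2 - s ^ 2 * ‖g k‖ ^ 2) / (s + t)
      ≤ ‖stepDefect s g k‖ ^ 2 / (t - s) := by
    rw [div_le_iff₀ hst]
    linarith [H.norm_sq_succ_le hs (by linarith) hk]
  calc (1 + s) * (1 + t) / (s + t) / 2 * ‖g k‖ ^ 2 + (‖g (k + 1)‖ ^ 2 - ‖g k‖ ^ 2) / (s + t) / 2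
      = (1 + s) / 2 * ‖g k‖ ^ 2 + (‖g (k + 1)‖ ^ 2 - s ^ 2 * ‖g k‖ ^ 2) / (s + t) / 2 := by
        field_simp
        ring
    _ ≤ (1 + s) / 2 * ‖g k‖ ^ 2 + ‖stepDefect s g k‖ ^ 2 / (t - s) / 2 := by
        linarith
    _ ≤ F k - F (k + 1) := H.decrease k hk

lemma sublinear_decrease_of_le (H : DescentInequalities N F g s t) (hs : -1 ≤ s) (hs0 : s ≤ 0)
    (ht : 1 < t) (hm : ∀ k ≤ N, m ≤ ‖g k‖ ^ 2) {j n : ℕ} (hjn : j ≤ n) (hn : n ≤ N) :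
    (1 + s) * (1 + t) / (s + t) / 2 * (n - j) * m + (‖g n‖ ^ 2 - ‖g j‖ ^ 2) / (s + t) / 2
      ≤ F j - F n := by
  induction n, hjn using Nat.le_induction with
  | base => simp
  | succ n _ ih =>
    have hst : 0 < s + t := by linarith
    have hone_add : 0 ≤ 1 + s := by linarith
    have hmn : (1 + s) * (1 + t) / (s + t) / 2 * m ≤ (1 + s) * (1 + t) / (s + t) / 2 * ‖g n‖ ^ 2 :=
      mul_le_mul_of_nonneg_left (hm n (by omega)) (by positivity)
    push_cast
    linear_combination ih (by omega) + hmn + H.sublinear_decrease hs0 hst hn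

lemma transition_decrease (H : DescentInequalities N F g s t) (hs : -1 ≤ s) (hs0 : s < 0)
    (ht : 1 < t) (hm : ∀ k ≤ N, m ≤ ‖g k‖ ^ 2) (hk : k < N) (hgap : ∀ j ≤ k, 0 ≤ invPowGap s t j)
    (hgap_succ : invPowGap s t (k + 1) ≤ 0) :
    (invPowSum s k + 1 + s + (invPowGap s t k - s ^ 2 * (1 + invPowGap s t k)) / (s + t)) / 2 * m
      + ‖g (k + 1)‖ ^ 2 / (s + t) / 2 ≤ F 0 - F (k + 1) := by
  have hst : 0 < s + t := by linarith
  have hgap_k := hgap k le_rfl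
  have henergy := H.descentEnergy_le hs hs0 ht.le hk hgap
  have hdecrease := H.sq_mul_invPowSum_add_le (t := t) hs0.ne hk
  set r := invPowGap s t k
  have hnorm := mul_le_mul_of_nonneg_left (H.norm_sq_succ_le hs0.le (by linarith) hk)
    (by positivity : 0 ≤ (1 + r) / (s + t) / 2)
  have hcancel : (s + t)⁻¹ * (s + t) = 1 := inv_mul_cancel₀ hst.ne'
  have hcoeff : 0 ≤ s ^ 2 * (invPowSum s (k + 1) - (1 + r) / (s + t)) := by
    have hsucc := sq_mul_invPowGap_succ (t := t) hs0.ne (by positivity) (by linarith) k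
    refine mul_nonneg (sq_nonneg s) (sub_nonneg.2 ?_)
    rw [div_le_iff₀ hst]
    linarith [mul_nonpos_of_nonneg_of_nonpos (sq_nonneg t) hgap_succ]
  have hm_k := mul_le_mul_of_nonneg_left (hm k hk.le) hcoeff
  have hm_succ := mul_le_mul_of_nonneg_left (hm (k + 1) hk) (by positivity : 0 ≤ r / (s + t))
  linear_combination henergy + hdecrease + hnorm + hm_k / 2 + hm_succ / 2
    + (1 + r) / 2 * (‖stepDefect s g k‖ ^ 2 / (t - s)) * hcancel
    - m / 2 * sq_mul_invPowSum_succ hs0.ne k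

lemma sublinear_rate (H : DescentInequalities N F g s t) (hs : -1 ≤ s) (hs0 : s < 0) (ht : 1 < t)
    (hm0 : 0 ≤ m) (hm : ∀ k ≤ N, m ≤ ‖g k‖ ^ 2) (hk : k < N)
    (hgap : ∀ j ≤ k, 0 ≤ invPowGap s t j) (hgap_succ : invPowGap s t (k + 1) ≤ 0) :
    sublinearRate s t N / 2 * m ≤ F 0 - F N := by
  have hst : 0 < s + t := by linarith
  have hhead := H.transition_decrease hs hs0 ht hm hk hgap hgap_succ
  have htail := H.sublinear_decrease_of_le hs hs0.le ht hm (Nat.succ_le_of_lt hk) le_rfl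
  have hlast := mul_le_mul_of_nonneg_right (hm N le_rfl) (by positivity : 0 ≤ (s + t)⁻¹)
  have hrate := mul_le_mul_of_nonneg_right (sublinearRate_le hs hs0 ht hk.le) hm0
  have hcancel : (s + t)⁻¹ * (s + t) = 1 := inv_mul_cancel₀ hst.ne'
  push_cast at htail
  linear_combination hhead + htail + hlast / 2 + hrate / 2 + (1 + s) / 2 * m * hcancel

lemma short_step_decrease (H : DescentInequalities N F g s t) (hs : 0 ≤ s) (hs1 : s ≤ 1)
    (ht : 1 < t) (hm : ∀ k ≤ N, m ≤ ‖g k‖ ^ 2) (hk : k < N) :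
    (1 + s + (1 - s) ^ 2 / (t - s)) / 2 * m ≤ F k - F (k + 1) := by
  have hts : 0 < t - s := by linarith
  have hdefect : (1 - s) * (‖g (k + 1)‖ ^ 2 - s * ‖g k‖ ^ 2) ≤ ‖stepDefect s g k‖ ^ 2 := by
    have hsq := mul_nonneg hs (sq_nonneg ‖g (k + 1) - g k‖)
    simp only [stepDefect, norm_sub_sq_real, real_inner_smul_right, norm_smul, mul_pow,
      Real.norm_eq_abs, sq_abs] at hsq ⊢
    linear_combination hsq
  have hcoeff : 0 ≤ 1 + s - (1 - s) * s / (t - s) := by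
    rw [sub_nonneg, div_le_iff₀ hts]
    nlinarith
  have hm_k := mul_le_mul_of_nonneg_left (hm k hk.le) hcoeff
  have hm_succ := mul_le_mul_of_nonneg_left (hm (k + 1) hk)
    (div_nonneg (sub_nonneg.2 hs1) hts.le)
  have hscaled := div_le_div_of_nonneg_right hdefect hts.le
  linear_combination hm_k / 2 + hm_succ / 2 + hscaled / 2 + H.decrease k hk

lemma short_step_rate (H : DescentInequalities N F g s t) (hs : 0 < s) (hs1 : s ≤ 1)
    (ht : 1 < t) (hm : ∀ k ≤ N, m ≤ ‖g k‖ ^ 2) :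
    sublinearRate s t N / 2 * m ≤ F 0 - F N := by
  calc sublinearRate s t N / 2 * m
      = ∑ _k ∈ range N, (1 + s + (1 - s) ^ 2 / (t - s)) / 2 * m := by
        rw [sublinearRate_of_pos hs (by linarith), sum_const, card_range, nsmul_eq_mul]
        ring
    _ ≤ ∑ k ∈ range N, (F k - F (k + 1)) :=
        sum_le_sum fun k hk => H.short_step_decrease hs.le hs1 ht hm (mem_range.1 hk)
    _ = F 0 - F N := sum_range_sub' F N

theorem min_rate (H : DescentInequalities N F g s t) (hs : -1 ≤ s) (hs0 : s ≠ 0) (hs1 : s ≤ 1)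
    (ht : 1 < t) (hm0 : 0 ≤ m) (hm : ∀ k ≤ N, m ≤ ‖g k‖ ^ 2) :
    min (sublinearRate s t N) (invPowSum s N) / 2 * m ≤ F 0 - F N := by
  have hmin_le_left : min (sublinearRate s t N) (invPowSum s N) / 2 * m
      ≤ sublinearRate s t N / 2 * m := by gcongr; exact min_le_left _ _
  obtain hneg | hpos := hs0.lt_or_gt
  · by_cases hgap : ∀ j ≤ N, 0 ≤ invPowGap s t j
    · have hE := invPowSum_nonneg hs N
      calc min (sublinearRate s t N) (invPowSum s N) / 2 * m
          ≤ invPowSum s N / 2 * ‖g N‖ ^ 2 := by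
            gcongr
            exacts [min_le_right _ _, hm N le_rfl]
        _ ≤ F 0 - F N := H.linear_rate hs hneg ht.le hgap
    · obtain ⟨k, hk, hk_nonneg, hk_succ⟩ := exists_nonneg_and_succ_neg (invPowGap_zero s t).ge hgap
      exact hmin_le_left.trans (H.sublinear_rate hs hneg ht hm0 hm hk hk_nonneg hk_succ.le)
  · exact hmin_le_left.trans (H.short_step_rate hpos hs1 ht hm)

end DescentInequalities

end Descent

section GradientDescent

variable {E : Type*} [NormedAddCommGroup E] [InnerProductSpace ℝ E] {f : E → ℝ} {G : E → E}
  {N : ℕ}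

theorem HasCurvatureBounds.min_rate_of_unit_steps {s t fmin m : ℝ} {x : ℕ → E}
    (h : HasCurvatureBounds f G (1 - t) (1 - s)) (hs : -1 ≤ s) (hs0 : s ≠ 0) (hs1 : s < 1)
    (ht : 1 < t) (hmin : ∀ z, fmin ≤ f z) (hx : ∀ k < N, x (k + 1) = x k - G (x k))
    (hm0 : 0 ≤ m) (hm : ∀ k ≤ N, m ≤ ‖G (x k)‖ ^ 2) :
    m / (2 * (1 - s)) * (1 + (1 - s) * min (sublinearRate s t N) (invPowSum s N))
      ≤ f (x 0) - fmin := by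
  have hL : 0 < 1 - s := sub_pos.2 hs1
  have hiterates := (h.descentInequalities (hs1.trans ht) hx).min_rate hs hs0 hs1.le ht hm0 hm
  have hlast : m / (2 * (1 - s)) ≤ f (x N) - fmin :=
    le_trans (by gcongr; exact hm N le_rfl) (h.norm_sq_le_sub hL hmin (x N))
  calc m / (2 * (1 - s)) * (1 + (1 - s) * min (sublinearRate s t N) (invPowSum s N))
      = m / (2 * (1 - s)) + min (sublinearRate s t N) (invPowSum s N) / 2 * m := by
        field_simp
    _ ≤ f (x 0) - fmin := by linarith

theorem gd_nonconvex_rate_constant_stepsize_general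
    {L μ : ℝ} (hL : 0 < L) (hμ : μ < 0) (hG : ∀ z, HasFDerivAt f (innerSL ℝ (G z)) z)
    (hsmooth : ConvexOn ℝ Set.univ fun z => L / 2 * ‖z‖ ^ 2 - f z)
    (hcurv : ConvexOn ℝ Set.univ fun z => f z - μ / 2 * ‖z‖ ^ 2)
    (hbdd : BddBelow (Set.range f)) {γ : ℝ} (hγ : 0 < γ) (hγL : γ * L ≤ 2) (hγL1 : γ * L ≠ 1)
    {x : ℕ → E} (hx : ∀ i < N, x (i + 1) = x i - γ • G (x i)) {PN : ℝ}
    (hPN : PN = pcoef (γ * L) (γ * μ) *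
      (N - (-(γ * L) * (γ * μ) / (γ * L - γ * μ)) *
        ∑ k ∈ range (N + 1),
          max ((-1 + (1 - γ * μ) ^ (-(2 * (k : ℤ)))) / (γ * μ) -
               (-1 + (1 - γ * L) ^ (-(2 * (k : ℤ)))) / (γ * L)) 0)) :
    1 / (2 * L) * (⨅ i : Fin (N + 1), ‖G (x i)‖ ^ 2) ≤
      (f (x 0) - ⨅ y, f y) /
        (1 + γ * L * min PN ((-1 + (1 - γ * L) ^ (-(2 * (N : ℤ)))) / (γ * L))) := by
  have hl : 0 < γ * L := mul_pos hγ hL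
  have hu : γ * μ < 0 := mul_neg_of_pos_of_neg hγ hμ
  have hs0 : 1 - γ * L ≠ 0 := sub_ne_zero.2 hγL1.symm
  have hrate : PN = sublinearRate (1 - γ * L) (1 - γ * μ) N := by
    simpa only [sub_sub_cancel, hPN] using (sublinearRate_eq (s := 1 - γ * L) (t := 1 - γ * μ)
      (N := N) hs0 (by linarith) (by linarith) (by linarith)).symm
  have hrate_nonneg : 0 ≤ PN := hrate ▸
    sublinearRate_nonneg (abs_le.2 ⟨by linarith, by linarith⟩) hs0 (by linarith) N
  have hsum : invPowSum (1 - γ * L) N = (-1 + (1 - γ * L) ^ (-(2 * (N : ℤ)))) / (γ * L) := by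
    rw [invPowSum_eq_div hs0 (by linarith), sub_sub_cancel]
  have hsum_nonneg := invPowSum_nonneg (by linarith : -1 ≤ 1 - γ * L) N
  have hm0 : 0 ≤ ⨅ i : Fin (N + 1), ‖G (x i)‖ ^ 2 := Real.iInf_nonneg fun _ => sq_nonneg _
  have hm (k : ℕ) (hk : k ≤ N) : (⨅ i : Fin (N + 1), ‖G (x i)‖ ^ 2) ≤ ‖G (x k)‖ ^ 2 :=
    ciInf_le (Set.finite_range _).bddBelow (⟨k, Nat.lt_succ_of_le hk⟩ : Fin (N + 1))
  have hscaled : HasCurvatureBounds (fun z => γ * f z) (fun z => γ • G z)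
      (1 - (1 - γ * μ)) (1 - (1 - γ * L)) := by
    simpa only [sub_sub_cancel] using
      (HasCurvatureBounds.of_convexOn hG hsmooth hcurv).const_mul hγ.le
  have hunit := hscaled.min_rate_of_unit_steps (by linarith) hs0 (by linarith) (by linarith)
    (fun z => mul_le_mul_of_nonneg_left (ciInf_le hbdd z) hγ.le) hx
    (mul_nonneg (sq_nonneg γ) hm0) fun k hk => by
      rw [norm_smul, mul_pow, Real.norm_eq_abs, sq_abs]
      gcongr
      exact hm k hk
  rw [sub_sub_cancel, ← hrate] at hunit
  rw [← hsum, le_div_iff₀ (by positivity)]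
  refine le_of_mul_le_mul_left ?_ hγ
  calc γ * (1 / (2 * L) * (⨅ i : Fin (N + 1), ‖G (x i)‖ ^ 2)
        * (1 + γ * L * min PN (invPowSum (1 - γ * L) N)))
      = γ ^ 2 * (⨅ i : Fin (N + 1), ‖G (x i)‖ ^ 2) / (2 * (γ * L))
        * (1 + γ * L * min PN (invPowSum (1 - γ * L) N)) := by field_simp
    _ ≤ γ * (f (x 0) - ⨅ y, f y) := by rwa [mul_sub]

end GradientDescent

/-- **Exact worst-case rate of gradient descent on smooth nonconvex functions with
constant stepsize (Theorem 3 / `thm:wc_GM_hypo_ct_all`).**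
Let `L > 0`, `μ < 0`, `f ∈ F_{μ,L}` bounded below, and run `N ≥ 1` steps with constant
stepsize `γ`, `0 < γL < 2`, `γL ≠ 1`. With
`P_N(γL,γμ) = p(γL,γμ)·(N − (−γLγμ/(γL−γμ))·Σ_{k=0}^N [ (−1+(1−γμ)^{−2k})/(γμ) −
(−1+(1−γL)^{−2k})/(γL) ]₊)`, the minimum squared gradient norm over the iterates obeys
`(1/(2L))·min_i ‖∇f(x_i)‖² ≤ (f(x₀)−f_*)/(1 + γL·min{P_N, (−1+(1−γL)^{−2N})/(γL)})`. -/
theorem gd_nonconvex_rate_constant_stepsize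
    {E : Type*} [NormedAddCommGroup E] [InnerProductSpace ℝ E] [CompleteSpace E]
    (L μ : ℝ) (hL : 0 < L) (hμ : μ < 0)
    (f : E → ℝ) (hdiff : Differentiable ℝ f)
    (hsmooth : ConvexOn ℝ Set.univ (fun z => L / 2 * ‖z‖ ^ 2 - f z))
    (hcurv : ConvexOn ℝ Set.univ (fun z => f z - μ / 2 * ‖z‖ ^ 2))
    (hbdd : BddBelow (Set.range f))
    (N : ℕ) (hN : 1 ≤ N)
    (γ : ℝ) (hγ : 0 < γ) (hγL : γ * L < 2) (hγL1 : γ * L ≠ 1)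
    (x : ℕ → E) (hx : ∀ i < N, x (i + 1) = x i - γ • gradient f (x i))
    (PN : ℝ)
    (hPN : PN = pcoef (γ * L) (γ * μ) *
      ((N : ℝ) - (-(γ * L) * (γ * μ) / (γ * L - γ * μ)) *
        ∑ k ∈ Finset.range (N + 1),
          max ((-1 + (1 - γ * μ) ^ (-(2 * (k : ℤ)))) / (γ * μ) -
               (-1 + (1 - γ * L) ^ (-(2 * (k : ℤ)))) / (γ * L)) 0)) :
    1 / (2 * L) * (⨅ i : Fin (N + 1), ‖gradient f (x i)‖ ^ 2) ≤
      (f (x 0) - ⨅ y, f y) /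
        (1 + γ * L *
          min PN ((-1 + (1 - γ * L) ^ (-(2 * (N : ℤ)))) / (γ * L))) :=
  gd_nonconvex_rate_constant_stepsize_general hL hμ (fun z => (hdiff z).hasGradientAt.hasFDerivAt)
    hsmooth hcurv hbdd hγ hγL.le hγL1 hx hPN
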